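/- Let n ∈ ℕ and let m ∈ ℕ₀ be even. Then for all real numbers x₁, …, xₙ with xᵢ ≥ 1 for each i, β^(m)(∏_{i=1}^n xᵢ) ≤ (∏_{i=1}^n β^(m)(xᵢ))^{1/n}. -/

import Mathlib

/-!
`β(x)` is the moment-generating function of `t ↦ -t` under the measure with density
`1 / (1 + e^{-t})` on `(0, ∞)`. Differentiating under the integral sign, which is
`ProbabilityTheory.iteratedDeriv_mgf`, gives `β^(m)(x) = ∫ (-t)^m e^{-x t} / (1 + e^{-t}) dt` for
`x > 0`. For even `m` the integrand is nonnegative and decreasing in `x`, hence so is `β^(m)` on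
`(0, ∞)`. Since all `xᵢ ≥ 1`, the product `∏ xᵢ` is at least each `xᵢ`, so `β^(m)(∏ xᵢ)` is at most
each `β^(m)(xᵢ)`, and therefore at most their geometric mean.
-/


open Real MeasureTheory Set

/-- Nielsen's beta function: `β(x) = ∫₀^∞ e^{-x t} / (1 + e^{-t}) dt`. -/
noncomputable def nielsenBeta (x : ℝ) : ℝ :=
  ∫ t in Set.Ioi (0:ℝ), Real.exp (-x * t) / (1 + Real.exp (-t))

/-- The measure `dt / (1 + e^{-t})` on `(0, ∞)`, which represents `β` as a Laplace transform. -/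
noncomputable def nielsenMeasure : Measure ℝ :=
  (volume.restrict (Ioi (0 : ℝ))).withDensity
    fun t => ((1 + Real.exp (-t))⁻¹.toNNReal : NNReal)

lemma measurable_nielsenDensity :
    Measurable fun t : ℝ => ((1 + Real.exp (-t))⁻¹).toNNReal := by
  fun_prop

lemma coe_nielsenDensity (t : ℝ) :
    (((1 + Real.exp (-t))⁻¹).toNNReal : ℝ) = (1 + Real.exp (-t))⁻¹ :=
  Real.coe_toNNReal _ (by positivity)

/-- The random variable is `t ↦ -t`, so that the argument of `β` and that of the
moment-generating function agree without a change of sign. Where the integral diverges, both sides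
are the same junk value, so the identity holds on all of `ℝ`. -/
lemma nielsenBeta_eq_mgf :
    nielsenBeta = ProbabilityTheory.mgf (fun t : ℝ => -t) nielsenMeasure := by
  funext x
  rw [ProbabilityTheory.mgf, nielsenMeasure,
    integral_withDensity_eq_integral_smul measurable_nielsenDensity, nielsenBeta]
  refine integral_congr_ae (Filter.Eventually.of_forall fun t => ?_)
  simp only [NNReal.smul_def, coe_nielsenDensity, smul_eq_mul, div_eq_mul_inv]
  rw [mul_comm, show -x * t = x * -t by ring]

lemma mem_interior_integrableExpSet_nielsen {x : ℝ} (hx : 0 < x) :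
    x ∈ interior (ProbabilityTheory.integrableExpSet (fun t : ℝ => -t) nielsenMeasure) := by
  refine interior_maximal (fun y (hy : 0 < y) => ?_) isOpen_Ioi (mem_Ioi.2 hx)
  change Integrable (fun t : ℝ => Real.exp (y * -t)) nielsenMeasure
  rw [nielsenMeasure, integrable_withDensity_iff_integrable_coe_smul measurable_nielsenDensity]
  refine (exp_neg_integrableOn_Ioi 0 hy).mono' ?_ (Filter.Eventually.of_forall fun t => ?_)
  · exact Measurable.aestronglyMeasurable (by fun_prop)
  · rw [coe_nielsenDensity, smul_eq_mul, Real.norm_of_nonneg (by positivity),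
      show y * -t = -y * t by ring]
    exact mul_le_of_le_one_left (by positivity)
      (inv_le_one_of_one_le₀ (by linarith [Real.exp_pos (-t)]))

lemma ae_nonneg_nielsenMeasure : ∀ᵐ t ∂nielsenMeasure, 0 ≤ t :=
  (withDensity_absolutelyContinuous _ _).ae_le
    ((ae_restrict_mem measurableSet_Ioi).mono fun _ ht => le_of_lt ht)

lemma iteratedDeriv_nielsenBeta {x : ℝ} (hx : 0 < x) (m : ℕ) :
    iteratedDeriv m nielsenBeta x = ∫ t, (-t) ^ m * Real.exp (x * -t) ∂nielsenMeasure := by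
  rw [nielsenBeta_eq_mgf,
    ProbabilityTheory.iteratedDeriv_mgf (mem_interior_integrableExpSet_nielsen hx)]

lemma iteratedDeriv_nielsenBeta_nonneg {x : ℝ} (hx : 0 < x) {m : ℕ} (hm : Even m) :
    0 ≤ iteratedDeriv m nielsenBeta x := by
  rw [iteratedDeriv_nielsenBeta hx]
  exact integral_nonneg fun t => mul_nonneg (hm.pow_nonneg _) (Real.exp_pos _).le

lemma iteratedDeriv_nielsenBeta_antitone {x y : ℝ} (hx : 0 < x) (hxy : x ≤ y) {m : ℕ}
    (hm : Even m) : iteratedDeriv m nielsenBeta y ≤ iteratedDeriv m nielsenBeta x := by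
  have hy := hx.trans_le hxy
  rw [iteratedDeriv_nielsenBeta hx, iteratedDeriv_nielsenBeta hy]
  have hint {z : ℝ} (hz : 0 < z) :=
    ProbabilityTheory.integrable_pow_mul_exp_of_mem_interior_integrableExpSet
      (mem_interior_integrableExpSet_nielsen hz) m
  refine integral_mono_ae (hint hy) (hint hx) ?_
  filter_upwards [ae_nonneg_nielsenMeasure] with t ht
  exact mul_le_mul_of_nonneg_left (Real.exp_le_exp.2 (by nlinarith)) (hm.pow_nonneg _)

theorem iteratedDeriv_nielsenBeta_prod (n : ℕ) (hn : 1 ≤ n) (m : ℕ) (hm : Even m)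
    (x : Fin n → ℝ) (hx : ∀ i, 1 ≤ x i) :
    iteratedDeriv m nielsenBeta (∏ i, x i) ≤
      (∏ i, iteratedDeriv m nielsenBeta (x i)) ^ ((1 : ℝ) / n) := by
  have hpos (i : Fin n) : 0 < x i := one_pos.trans_le (hx i)
  have hle (i : Fin n) : x i ≤ ∏ j, x j := by
    rw [← Finset.mul_prod_erase _ _ (Finset.mem_univ i)]
    refine le_mul_of_one_le_right (hpos i).le ?_
    exact Finset.prod_induction _ (fun r : ℝ => 1 ≤ r)
      (fun a b ha hb => one_le_mul_of_one_le_of_one_le ha hb) le_rfl fun j _ => hx j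
  have h0 : 0 ≤ iteratedDeriv m nielsenBeta (∏ i, x i) :=
    iteratedDeriv_nielsenBeta_nonneg (Finset.prod_pos fun i _ => hpos i) hm
  have hpow : iteratedDeriv m nielsenBeta (∏ i, x i) ^ n ≤
      ∏ i, iteratedDeriv m nielsenBeta (x i) := by
    calc _ = ∏ _i : Fin n, iteratedDeriv m nielsenBeta (∏ i, x i) := by simp
      _ ≤ _ := Finset.prod_le_prod (fun _ _ => h0) fun i _ =>
        iteratedDeriv_nielsenBeta_antitone (hpos i) (hle i) hm
  calc iteratedDeriv m nielsenBeta (∏ i, x i)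
      = (iteratedDeriv m nielsenBeta (∏ i, x i) ^ n) ^ ((1 : ℝ) / n) := by
        rw [one_div, Real.pow_rpow_inv_natCast h0 (by omega)]
    _ ≤ _ := Real.rpow_le_rpow (pow_nonneg h0 n) hpow (by positivity)
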